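/- Let p be a prime, G a finite group, and P a Sylow p-subgroup of G. If P is cyclic, then for every irreducible complex character χ of G, the restriction χ_P is a sum of characters of the form λ^P induced from irreducible characters λ of subgroups Q ≤ P with χ(1)_p = |P : Q|. -/

import Mathlib

open scoped Classical

/-- The induced character (as a class function formula): for `f` a function on a
subgroup `H` of a finite group `G`, `inducedChar H f g = (1/|H|) ∑_{x ∈ G, xgx⁻¹ ∈ H} f (xgx⁻¹)`. -/
noncomputable def inducedChar {G : Type*} [Group G] [Fintype G] (H : Subgroup G)
    (f : H → ℂ) : G → ℂ :=
  fun g => (Fintype.card H : ℂ)⁻¹ *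
    ∑ x : G, if h : x * g * x⁻¹ ∈ H then f ⟨x * g * x⁻¹, h⟩ else 0

/-- `χ` is the character of an irreducible complex representation of `G`. -/
def IsIrreducibleCharacter {G : Type} [Group G] (χ : G → ℂ) : Prop :=
  ∃ V : FDRep ℂ G, CategoryTheory.Simple V ∧ χ = FDRep.character V

/-- The restriction of `χ` (a character of degree `d` of the ambient group `G`) to the
subgroup `P` is a sum of characters `λ^P` induced from irreducible characters `λ` of
subgroups `Q ≤ P` satisfying `d_p = |P : Q|` (the `p`-part of the degree equals the index). -/
def SumInducedProperty (p : ℕ) {G : Type} [Group G] [Fintype G] (P : Subgroup G)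
    (χ : G → ℂ) (d : ℕ) : Prop :=
  ∃ (n : ℕ) (Q : Fin n → Subgroup ↥P) (lam : (i : Fin n) → ↥(Q i) → ℂ),
    (∀ i, IsIrreducibleCharacter (lam i)) ∧
    (∀ i, p ^ (d.factorization p) = (Q i).index) ∧
    (∀ x : ↥P, χ ↑x = ∑ i, inducedChar (Q i) (lam i) x)

/-!
Let `x ∈ P` have order `p ^ r > 1`, let `p ^ a` be the `p`-part of `χ(1)`, and let `C` be the
centralizer of `x`. Since `P` is cyclic, Burnside's transfer theorem gives `C` a normal
`p`-complement `L`. The averages `T i` of `|χ|²` over the cosets `x ^ i L`, for `i` prime to `p`,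
are Galois conjugate algebraic integers: they are the values of one integer polynomial at the
primitive `p ^ r`-th roots of unity. Letting the class function induced from the restriction of the
conjugate of `χ` to `x L ⊆ C` act by a scalar on the representation shows that even `T 1 / p ^ a` is
an algebraic integer. If `χ(x) ≠ 0`, then AM-GM applied to the norm of `T 1 / p ^ a` gives
`∑ T i ≥ p ^ a * φ(p ^ r)`, while `∑ |χ|² = |G|`, together with `|N(⟨x⟩) : C| ≤ p - 1`, gives
`∑ T i < (p - 1) * |P|`. Hence `p ^ (a + r)` divides `|P|`.

So `χ` vanishes on `P` outside the subgroup `Q` of index `p ^ a`. By orthogonality every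
multiplicity in `χ_Q` is then divisible by `|P : Q|`, and `χ_P` is induced from `Q`.
-/

open Polynomial Module

section EigenvalueTraces

variable {K V : Type*} [Field K] [AddCommGroup V] [Module K V]

theorem pow_apply_of_apply_eq_smul {f : End K V} {v : V} {μ : K} (hv : f v = μ • v) (i : ℕ) :
    (f ^ i) v = μ ^ i • v := by
  induction i with
  | zero => simp
  | succ i ih => rw [pow_succ, End.mul_apply, hv, map_smul, ih, smul_smul, ← pow_succ']

theorem trace_pow_eq_sum_of_basis {ι : Type*} [Fintype ι] (b : Basis ι K V) {f : End K V}
    {μ : ι → K} (hμ : ∀ j, f (b j) = μ j • b j) (i : ℕ) :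
    LinearMap.trace K V (f ^ i) = ∑ j, μ j ^ i := by
  simp [LinearMap.trace_eq_matrix_trace K b, Matrix.trace, LinearMap.toMatrix_apply,
    pow_apply_of_apply_eq_smul (hμ _)]

theorem isSemisimple_of_pow_succ_eq_self [CharZero K] {f : End K V} {n : ℕ} (hn : n ≠ 0)
    (hf : f ^ (n + 1) = f) : f.IsSemisimple := by
  have : NeZero (n : K) := ⟨by exact_mod_cast hn⟩
  have coprime_X : IsCoprime (X : K[X]) (X ^ n - 1) :=
    ⟨X ^ (n - 1), -1, by rw [← pow_succ, Nat.sub_add_cancel (Nat.pos_of_ne_zero hn)]; ring⟩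
  refine End.isSemisimple_of_squarefree_aeval_eq_zero (p := X * (X ^ n - 1)) ?_ ?_
  · exact (separable_X.mul (X_pow_sub_one_separable_iff.mpr this.ne) coprime_X).squarefree
  · rw [map_mul, map_sub, map_pow, aeval_X, map_one, mul_sub, mul_one, ← pow_succ', hf, sub_self]

variable [FiniteDimensional K V]

theorem exists_basis_of_isSemisimple [IsAlgClosed K] {f : End K V} (hf : f.IsSemisimple) :
    ∃ (b : Basis (Fin (finrank K V)) K V) (μ : Fin (finrank K V) → K),
      ∀ j, f (b j) = μ j • b j := by
  have eigenspaces_internal := DirectSum.isInternal_submodule_of_iSupIndep_of_iSup_eq_top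
    f.eigenspaces_iSupIndep hf.iSup_eigenspace_eq_top
  let v := eigenspaces_internal.collectedBasis fun μ ↦ finBasis K (f.eigenspace μ)
  let e := v.indexEquiv (finBasis K V)
  refine ⟨v.reindex e, fun j ↦ (e.symm j).1, fun j ↦ ?_⟩
  rw [Basis.reindex_apply]
  exact End.mem_eigenspace_iff.mp (eigenspaces_internal.collectedBasis_mem _ _)

theorem exists_basis_of_pow_succ_eq_self [IsAlgClosed K] [CharZero K] {f : End K V} {n : ℕ}
    (hn : n ≠ 0) (hf : f ^ (n + 1) = f) :
    ∃ (b : Basis (Fin (finrank K V)) K V) (μ : Fin (finrank K V) → K),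
      (∀ j, f (b j) = μ j • b j) ∧ ∀ j, μ j ^ (n + 1) = μ j := by
  obtain ⟨b, μ, hμ⟩ := exists_basis_of_isSemisimple (isSemisimple_of_pow_succ_eq_self hn hf)
  refine ⟨b, μ, hμ, fun j ↦ smul_left_injective K (b.ne_zero j) ?_⟩
  simp only [← pow_apply_of_apply_eq_smul (hμ j), hf, hμ]

theorem exists_aeval_pow_eq_trace_pow [IsAlgClosed K] [CharZero K] {n : ℕ} [NeZero n] {ω : K}
    (hω : IsPrimitiveRoot ω n) {f : End K V} (hf : f ^ (n + 1) = f) :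
    ∃ F : ℤ[X], ∀ i ≠ 0, aeval (ω ^ i) F = LinearMap.trace K V (f ^ i) := by
  obtain ⟨b, μ, hμ, hpow⟩ := exists_basis_of_pow_succ_eq_self (NeZero.ne n) hf
  have (j : Fin (finrank K V)) : ∃ F : ℤ[X], ∀ i ≠ 0, aeval (ω ^ i) F = μ j ^ i := by
    obtain h | h := eq_or_ne (μ j) 0
    · exact ⟨0, fun i hi ↦ by simp [h, hi]⟩
    · obtain ⟨a, -, ha⟩ := hω.eq_pow_of_pow_eq_one
        (mul_right_cancel₀ h (by rw [← pow_succ, hpow, one_mul]))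
      exact ⟨X ^ a, fun i _ ↦ by rw [← ha, map_pow, aeval_X, pow_right_comm]⟩
  choose F hF using this
  refine ⟨∑ j, F j, fun i hi ↦ ?_⟩
  rw [map_sum, trace_pow_eq_sum_of_basis b hμ]
  exact Finset.sum_congr rfl fun j _ ↦ hF j i hi

end EigenvalueTraces

section CharacterValues

variable {G V : Type*} [Group G] [AddCommGroup V] [Module ℂ V] [FiniteDimensional ℂ V]
  (ρ : Representation ℂ G V)

theorem exists_aeval_pow_eq_average_character {n : ℕ} [NeZero n] {ω : ℂ}
    (hω : IsPrimitiveRoot ω n) {x : G} (hx : x ^ n = 1) (L : Subgroup G) [Fintype L]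
    (hL : ∀ k ∈ L, Commute x k) :
    ∃ F : ℤ[X], ∀ i ≠ 0,
      aeval (ω ^ i) F = (Fintype.card L : ℂ)⁻¹ * ∑ k : L, ρ.character (x ^ i * k) := by
  have : Invertible (Fintype.card L : ℂ) := invertibleOfNonzero (by simp)
  let σ : Representation ℂ L V := ρ.comp L.subtype
  let e : End ℂ V := σ.averageMap
  have e_eq : e = (Fintype.card L : ℂ)⁻¹ • ∑ k : L, ρ k := by
    simp [e, σ, Representation.averageMap, GroupAlgebra.average]
  have e_idem : IsIdempotentElem e := σ.isProj_averageMap.isIdempotentElem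
  have e_comm : Commute (ρ x) e := by
    rw [e_eq]
    refine (Commute.sum_right _ _ _ fun k _ ↦ ?_).smul_right _
    exact (hL k k.2).map ρ
  have pow_eq (i : ℕ) (hi : i ≠ 0) : (ρ x * e) ^ i = ρ (x ^ i) * e := by
    rw [e_comm.mul_pow, map_pow, e_idem.pow_eq hi]
  obtain ⟨F, hF⟩ := exists_aeval_pow_eq_trace_pow (f := ρ x * e) hω <| by
    rw [pow_eq _ n.succ_ne_zero, pow_succ, hx, one_mul]
  refine ⟨F, fun i hi ↦ ?_⟩
  rw [hF i hi, pow_eq i hi, e_eq, mul_smul_comm, Finset.mul_sum, map_smul, map_sum, smul_eq_mul]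
  simp only [← map_mul]
  rfl

theorem exists_aeval_pow_eq_character {n : ℕ} [NeZero n] {ω : ℂ} (hω : IsPrimitiveRoot ω n) {x : G}
    (hx : x ^ n = 1) : ∃ F : ℤ[X], ∀ i ≠ 0, aeval (ω ^ i) F = ρ.character (x ^ i) := by
  obtain ⟨F, hF⟩ := exists_aeval_pow_eq_trace_pow (f := ρ x) hω (by simp [pow_succ, ← map_pow, hx])
  exact ⟨F, fun i hi ↦ by rw [hF i hi, ← map_pow]; rfl⟩

theorem pow_two_mul_sub_one_eq_inv {M : Type*} [DivisionMonoid M] {n : ℕ} (hn : n ≠ 0) {y : M}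
    (hy : y ^ n = 1) : y ^ (2 * n - 1) = y⁻¹ :=
  eq_inv_of_mul_eq_one_left <| by
    rw [← pow_succ, Nat.sub_add_cancel (by omega), mul_comm, pow_mul, hy, one_pow]

theorem isIntegral_aeval {R A : Type*} [CommRing R] [CommRing A] [Algebra R A] {a : A}
    (ha : IsIntegral R a) (F : R[X]) : IsIntegral R (aeval a F) :=
  adjoin_le_integralClosure ha (aeval_mem_adjoin_singleton R a)

variable [Finite G]

theorem isIntegral_character (g : G) : IsIntegral ℤ (ρ.character g) := by
  have : NeZero (Nat.card G) := ⟨Nat.card_pos.ne'⟩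
  have hω := Complex.isPrimitiveRoot_exp (Nat.card G) (NeZero.ne _)
  obtain ⟨F, hF⟩ := exists_aeval_pow_eq_character ρ hω (pow_card_eq_one' (x := g))
  rw [← pow_one g, ← hF 1 one_ne_zero, pow_one]
  exact isIntegral_aeval (hω.isIntegral (NeZero.pos _)) F

theorem character_inv_eq_conj (g : G) : ρ.character g⁻¹ = starRingEnd ℂ (ρ.character g) := by
  have : NeZero (Nat.card G) := ⟨Nat.card_pos.ne'⟩
  have hω := Complex.isPrimitiveRoot_exp (Nat.card G) (NeZero.ne _)
  set ω := Complex.exp (2 * Real.pi * Complex.I / Nat.card G)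
  obtain ⟨F, hF⟩ := exists_aeval_pow_eq_character ρ hω (pow_card_eq_one' (x := g))
  have conj_ω : starRingEnd ℂ ω = ω⁻¹ :=
    (Complex.inv_eq_conj (hω.norm'_eq_one (NeZero.ne _))).symm
  have hi : 2 * Nat.card G - 1 ≠ 0 := by have := Nat.card_pos (α := G); omega
  calc ρ.character g⁻¹ = aeval ω⁻¹ F := by
        rw [← pow_two_mul_sub_one_eq_inv (NeZero.ne _) (pow_card_eq_one' (x := g)), ← hF _ hi,
          pow_two_mul_sub_one_eq_inv (NeZero.ne _) hω.pow_eq_one]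
    _ = starRingEnd ℂ (aeval ω F) := by
        rw [← conj_ω, aeval_def, aeval_def, hom_eval₂, RingHom.ext_int (RingHom.comp _ _)]
    _ = starRingEnd ℂ (ρ.character g) := by rw [← pow_one g, ← hF 1 one_ne_zero, pow_one]

theorem character_mul_character_inv (g : G) :
    ρ.character g * ρ.character g⁻¹ = (‖ρ.character g‖ ^ 2 : ℝ) := by
  rw [character_inv_eq_conj, Complex.mul_conj, Complex.normSq_eq_norm_sq]

end CharacterValues

section CyclotomicNormBound

theorem card_le_sum_of_one_le_prod {ι : Type*} [Fintype ι] {a : ι → ℝ} (ha : ∀ i, 0 < a i)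
    (hprod : 1 ≤ ∏ i, a i) : Fintype.card ι ≤ ∑ i, a i := by
  have log_nonneg : 0 ≤ ∑ i, Real.log (a i) := by
    rw [← Real.log_prod fun i _ ↦ (ha i).ne']
    exact Real.log_nonneg hprod
  have log_le : ∑ i, Real.log (a i) ≤ ∑ i, (a i - 1) :=
    Finset.sum_le_sum fun i _ ↦ Real.log_le_sub_one_of_pos (ha i)
  simp only [Finset.sum_sub_distrib, Finset.sum_const, Finset.card_univ, nsmul_eq_mul,
    mul_one] at log_le
  linarith

theorem one_le_prod_norm_embeddings {K : Type*} [Field K] [NumberField K] {a : K} (ha : a ≠ 0)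
    (hint : IsIntegral ℤ a) : 1 ≤ ∏ σ : K →ₐ[ℚ] ℂ, ‖σ a‖ := by
  obtain ⟨m, hm⟩ := IsIntegrallyClosed.isIntegral_iff.mp (Algebra.isIntegral_norm ℚ hint)
  rw [eq_intCast] at hm
  have m_ne_zero : m ≠ 0 := by
    rintro rfl
    exact (Algebra.norm_ne_zero_iff (R := ℚ)).mpr ha (by simpa using hm.symm)
  rw [← norm_prod, ← Algebra.norm_eq_prod_embeddings, ← hm]
  simp only [eq_ratCast, Rat.cast_intCast, Complex.norm_intCast]
  exact_mod_cast Int.one_le_abs m_ne_zero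

theorem card_embeddings_le_sum_norm {K : Type*} [Field K] [NumberField K] {a : K} (ha : a ≠ 0)
    (hint : IsIntegral ℤ a) : Fintype.card (K →ₐ[ℚ] ℂ) ≤ ∑ σ : K →ₐ[ℚ] ℂ, ‖σ a‖ :=
  card_le_sum_of_one_le_prod (fun σ ↦ norm_pos_iff.mpr (by simpa using ha))
    (one_le_prod_norm_embeddings ha hint)

variable {n : ℕ} [NeZero n] {ω : ℂ}

theorem mul_totient_le_sum_primitiveRoots (hω : IsPrimitiveRoot ω n) {F : ℤ[X]} {t : ℕ}
    (ht : t ≠ 0) (hF : aeval ω F ≠ 0) (hint : IsIntegral ℤ (aeval ω F / t)) :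
    (t * n.totient : ℝ) ≤ ∑ ζ ∈ primitiveRoots n ℂ, ‖aeval ζ F‖ := by
  let K := CyclotomicField n ℚ
  have : NeZero (n : ℚ) := NeZero.charZero
  have : IsCyclotomicExtension {n} ℚ K := CyclotomicField.isCyclotomicExtension n ℚ
  let z : K := IsCyclotomicExtension.zeta n ℚ K
  have hz : IsPrimitiveRoot z n := IsCyclotomicExtension.zeta_spec n ℚ K
  have irreducible := cyclotomic.irreducible_rat (NeZero.pos n)
  let e := hz.embeddingsEquivPrimitiveRoots ℂ irreducible
  let a : K := aeval z F / t
  have apply_a (σ : K →ₐ[ℚ] ℂ) : σ a = aeval (e σ : ℂ) F / t := by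
    rw [hz.embeddingsEquivPrimitiveRoots_apply_coe ℂ irreducible σ, map_div₀, map_natCast]
    exact congr_arg (· / (t : ℂ)) (aeval_algHom_apply (σ.restrictScalars ℤ) z F).symm
  let σ₀ := e.symm ⟨ω, (mem_primitiveRoots (NeZero.pos n)).mpr hω⟩
  have apply_σ₀ : σ₀ a = aeval ω F / t := by rw [apply_a, Equiv.apply_symm_apply]
  have t_ne_zero : (t : ℂ) ≠ 0 := Nat.cast_ne_zero.mpr ht
  have a_ne_zero : a ≠ 0 := fun h ↦ div_ne_zero hF t_ne_zero (by rw [← apply_σ₀, h, map_zero])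
  have a_integral : IsIntegral ℤ a :=
    (isIntegral_algHom_iff (σ₀.restrictScalars ℤ) σ₀.injective).mp (by simpa [apply_σ₀] using hint)
  have card_le : (n.totient : ℝ) ≤ ∑ σ : K →ₐ[ℚ] ℂ, ‖σ a‖ := by
    simpa [Fintype.card_congr e, Complex.card_primitiveRoots]
      using card_embeddings_le_sum_norm a_ne_zero a_integral
  have sum_eq : ∑ σ : K →ₐ[ℚ] ℂ, ‖σ a‖ = (∑ ζ ∈ primitiveRoots n ℂ, ‖aeval ζ F‖) / t := by
    rw [← Finset.sum_coe_sort (primitiveRoots n ℂ), Finset.sum_div]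
    exact Fintype.sum_equiv e _ _ fun σ ↦ by rw [apply_a, norm_div, Complex.norm_natCast]
  rwa [sum_eq, le_div_iff₀' (by positivity)] at card_le

theorem sum_primitiveRoots_eq_sum_coprime (hω : IsPrimitiveRoot ω n) {M : Type*}
    [AddCommMonoid M] (f : ℂ → M) :
    ∑ ζ ∈ primitiveRoots n ℂ, f ζ = ∑ i ∈ Finset.range n with i.Coprime n, f (ω ^ i) := by
  refine (Finset.sum_bij (fun i _ ↦ ω ^ i) (fun i hi ↦ ?_) (fun i hi j hj ↦ ?_) (fun ζ hζ ↦ ?_)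
    fun _ _ ↦ rfl).symm
  · exact (mem_primitiveRoots (NeZero.pos n)).mpr (hω.pow_of_coprime i (Finset.mem_filter.mp hi).2)
  · simp only [Finset.mem_filter, Finset.mem_range] at hi hj
    exact hω.pow_inj hi.1 hj.1
  · obtain ⟨i, hi, coprime, rfl⟩ :=
      hω.isPrimitiveRoot_iff.mp ((mem_primitiveRoots (NeZero.pos n)).mp hζ)
    exact ⟨i, Finset.mem_filter.mpr ⟨Finset.mem_range.mpr hi, coprime⟩, rfl⟩

theorem mul_totient_le_sum_coprime (hω : IsPrimitiveRoot ω n) {F : ℤ[X]} {t : ℕ}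
    (ht : t ≠ 0) (hF : aeval ω F ≠ 0) (hint : IsIntegral ℤ (aeval ω F / t)) :
    (t * n.totient : ℝ) ≤ ∑ i ∈ Finset.range n with i.Coprime n, ‖aeval (ω ^ i) F‖ := by
  rw [← sum_primitiveRoots_eq_sum_coprime hω fun ζ ↦ ‖aeval ζ F‖]
  exact mul_totient_le_sum_primitiveRoots hω ht hF hint

end CyclotomicNormBound

section InducedCharacters

variable {G : Type*} [Group G] [Fintype G] (H : Subgroup G) (f : H → ℂ)

theorem sum_dite_mem_mul (u : G → ℂ) :
    ∑ g, (if h : g ∈ H then f ⟨g, h⟩ else 0) * u g = ∑ k : H, f k * u k := by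
  let f₀ (g : G) : ℂ := if h : g ∈ H then f ⟨g, h⟩ else 0
  calc ∑ g, f₀ g * u g = ∑ g with g ∈ H, f₀ g * u g :=
        (Finset.sum_filter_of_ne fun g _ h ↦ by_contra fun hg ↦ by simp [f₀, hg] at h).symm
    _ = ∑ k : H, f₀ k * u k := Finset.sum_subtype _ (by simp) _
    _ = ∑ k : H, f k * u k := by simp [f₀]

theorem sum_eq_card_mul_sum_quotient {u : G → ℂ} (hu : ∀ x, ∀ k ∈ H, u (x * k) = u x) :
    ∑ x, u x = Fintype.card H * ∑ q : G ⧸ H, u q.out := by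
  have u_eq (x : G) : u x = u (x : G ⧸ H).out := by
    obtain ⟨k, hk⟩ := QuotientGroup.mk_out_eq_mul H x
    rw [hk, hu x k k.2]
  rw [Fintype.sum_equiv Subgroup.groupEquivQuotientProdSubgroup u
    (fun y : (G ⧸ H) × H ↦ u y.1.out) u_eq, Fintype.sum_prod_type]
  simp [Finset.mul_sum]

theorem inducedChar_conj (x g : G) : inducedChar H f (x * g * x⁻¹) = inducedChar H f g := by
  unfold inducedChar
  congr 1
  exact Fintype.sum_equiv (Equiv.mulRight x) _ _ fun y ↦ by simp [mul_assoc]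

theorem isIntegral_inducedChar {f : H → ℂ} (hconj : ∀ x g, f (x * g * x⁻¹) = f g)
    (hint : ∀ g, IsIntegral ℤ (f g)) (g : G) : IsIntegral ℤ (inducedChar H f g) := by
  let f₀ (g : G) : ℂ := if h : g ∈ H then f ⟨g, h⟩ else 0
  have f₀_conj (k : G) (hk : k ∈ H) (g : G) : f₀ (k * g * k⁻¹) = f₀ g := by
    have mem_iff : k * g * k⁻¹ ∈ H ↔ g ∈ H := by
      rw [H.mul_mem_cancel_right (inv_mem hk), H.mul_mem_cancel_left hk]
    by_cases hg : g ∈ H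
    · simp only [f₀, dif_pos hg, dif_pos (mem_iff.mpr hg)]
      exact hconj ⟨k, hk⟩ ⟨g, hg⟩
    · simp [f₀, hg, mem_iff]
  have f₀_integral (g : G) : IsIntegral ℤ (f₀ g) := by
    by_cases hg : g ∈ H <;> simp [f₀, hg, hint, isIntegral_zero]
  have eq_sum : inducedChar H f g = ∑ q : G ⧸ H, f₀ (q.out⁻¹ * g * q.out) := by
    calc inducedChar H f g = (Fintype.card H : ℂ)⁻¹ * ∑ x : G, f₀ (x⁻¹ * g * x) := by
          rw [inducedChar, ← Equiv.sum_comp (Equiv.inv G)]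
          simp [f₀]
      _ = ∑ q : G ⧸ H, f₀ (q.out⁻¹ * g * q.out) := by
          rw [sum_eq_card_mul_sum_quotient H (u := fun x ↦ f₀ (x⁻¹ * g * x)) fun x k hk ↦ ?_,
            inv_mul_cancel_left₀ (by simp)]
          simpa [mul_assoc] using f₀_conj k⁻¹ (inv_mem hk) (x⁻¹ * g * x)
  rw [eq_sum]
  exact IsIntegral.sum _ fun q _ ↦ f₀_integral _

theorem sum_inducedChar_mul {χ : G → ℂ} (hχ : ∀ x g, χ (x * g * x⁻¹) = χ g) :
    ∑ g, inducedChar H f g * χ g = H.index * ∑ k : H, f k * χ k := by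
  have sum_conj (x : G) :
      ∑ g, (if h : x * g * x⁻¹ ∈ H then f ⟨x * g * x⁻¹, h⟩ else 0) * χ g = ∑ k : H, f k * χ k := by
    rw [← sum_dite_mem_mul]
    exact Fintype.sum_equiv (MulAut.conj x).toEquiv _ _ fun g ↦ by
      rw [← hχ x g]
      rfl
  have card_eq : (Fintype.card G : ℂ) = H.index * Fintype.card H := by
    exact_mod_cast (by simpa using H.index_mul_card.symm)
  calc ∑ g, inducedChar H f g * χ g
      = (Fintype.card H : ℂ)⁻¹ * ∑ x : G, ∑ g,
          (if h : x * g * x⁻¹ ∈ H then f ⟨x * g * x⁻¹, h⟩ else 0) * χ g := by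
        rw [Finset.sum_comm, Finset.mul_sum]
        exact Finset.sum_congr rfl fun g _ ↦ by rw [inducedChar, mul_assoc, Finset.sum_mul]
    _ = H.index * ∑ k : H, f k * χ k := by
        simp only [sum_conj, Finset.sum_const, Finset.card_univ, nsmul_eq_mul, card_eq]
        field_simp [show (Fintype.card H : ℂ) ≠ 0 by simp]

end InducedCharacters

section IrreducibleRepresentations

variable {G : Type} [Group G] (V : FDRep ℂ G)

theorem finrank_invariants_linHom_self [CategoryTheory.Simple V] :
    finrank ℂ (Representation.linHom V.ρ V.ρ).invariants = 1 := by
  rw [(Representation.linHom.invariantsEquivFDRepHom V V).finrank_eq,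
    CategoryTheory.finrank_endomorphism_simple_eq_one ℂ V]

theorem nontrivial_of_simple [CategoryTheory.Simple V] : Nontrivial V := by
  by_contra! h
  have := finrank_invariants_linHom_self V
  simp [finrank_zero_of_subsingleton] at this

theorem exists_smul_one_of_commute [CategoryTheory.Simple V] {f : End ℂ V}
    (hf : ∀ g, Commute (V.ρ g) f) : ∃ c : ℂ, c • 1 = f := by
  have := nontrivial_of_simple V
  have mem (h : End ℂ V) (hh : ∀ g, Commute (V.ρ g) h) :
      h ∈ (Representation.linHom V.ρ V.ρ).invariants := fun g ↦ by
    rw [Representation.linHom_apply, ← End.mul_eq_comp, ← End.mul_eq_comp, ← mul_assoc,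
      (hh g).eq, mul_assoc, ← map_mul, mul_inv_cancel, map_one, mul_one]
  let one : (Representation.linHom V.ρ V.ρ).invariants := ⟨1, mem 1 fun _ ↦ Commute.one_right _⟩
  have one_ne_zero : one ≠ 0 := fun h ↦ one_ne_zero (congr_arg Subtype.val h)
  obtain ⟨c, hc⟩ := (finrank_eq_one_iff_of_nonzero' one one_ne_zero).mp
    (finrank_invariants_linHom_self V) ⟨f, mem f hf⟩
  exact ⟨c, congr_arg Subtype.val hc⟩

variable [Fintype G]

theorem commute_sum_smul_of_conj_invariant {φ : G → ℂ} (hφ : ∀ x g, φ (x * g * x⁻¹) = φ g)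
    (x : G) : Commute (V.ρ x) (∑ g, φ g • V.ρ g) := by
  rw [Commute, SemiconjBy, Finset.mul_sum, Finset.sum_mul]
  refine Fintype.sum_equiv (MulAut.conj x).toEquiv _ _ fun g ↦ ?_
  simp [hφ, ← map_mul]

theorem isIntegral_sum_smul {φ : G → ℂ} (hφ : ∀ g, IsIntegral ℤ (φ g)) :
    IsIntegral (integralClosure ℤ ℂ) (∑ g, φ g • V.ρ g) := by
  let A := integralClosure ℤ ℂ
  let z : MonoidAlgebra A G := ∑ g, MonoidAlgebra.single g (⟨φ g, hφ g⟩ : A)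
  let toEnd : MonoidAlgebra A G →ₐ[A] End ℂ V := MonoidAlgebra.lift A _ G V.ρ
  have apply_z : toEnd z = ∑ g, φ g • V.ρ g := by
    simp only [z, toEnd, map_sum, MonoidAlgebra.lift_single]
    rfl
  rw [← apply_z]
  exact (Algebra.IsIntegral.isIntegral z).map toEnd

theorem exists_isIntegral_mul_finrank_eq_sum [CategoryTheory.Simple V] {φ : G → ℂ}
    (hconj : ∀ x g, φ (x * g * x⁻¹) = φ g) (hint : ∀ g, IsIntegral ℤ (φ g)) :
    ∃ c : ℂ, IsIntegral ℤ c ∧ c * finrank ℂ V = ∑ g, φ g * V.character g := by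
  have := nontrivial_of_simple V
  obtain ⟨c, hc⟩ := exists_smul_one_of_commute V (commute_sum_smul_of_conj_invariant V hconj)
  refine ⟨c, ?_, ?_⟩
  · have integral := isIntegral_sum_smul V hint
    rw [← hc, ← Algebra.algebraMap_eq_smul_one,
      isIntegral_algebraMap_iff (FaithfulSMul.algebraMap_injective _ _)] at integral
    exact isIntegral_trans (A := integralClosure ℤ ℂ) c integral
  · simpa [FDRep.character] using congr_arg (LinearMap.trace ℂ V) hc

theorem sum_norm_sq_character [CategoryTheory.Simple V] :
    ∑ g, ‖V.character g‖ ^ 2 = Fintype.card G := by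
  have : Invertible (Nat.card G : ℂ) := invertibleOfNonzero (by simp)
  have orthonormal := FDRep.char_orthonormal V V
  rw [if_pos ⟨CategoryTheory.Iso.refl V⟩, inv_mul_eq_iff_eq_mul₀ (by simp)] at orthonormal
  have norm_sq (g : G) : V.character g * V.character g⁻¹ = (‖V.character g‖ ^ 2 : ℝ) :=
    character_mul_character_inv V.ρ g
  simp only [norm_sq, mul_one, Nat.card_eq_fintype_card] at orthonormal
  exact_mod_cast orthonormal

theorem finrank_dvd_card [CategoryTheory.Simple V] : finrank ℂ V ∣ Fintype.card G := by
  have := nontrivial_of_simple V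
  have finrank_ne_zero : (finrank ℂ V : ℚ) ≠ 0 := by exact_mod_cast finrank_pos.ne'
  obtain ⟨c, hc, hc_mul⟩ := exists_isIntegral_mul_finrank_eq_sum V
    (φ := fun g ↦ V.character g⁻¹) (fun x g ↦ by rw [conj_inv, FDRep.char_conj])
    fun g ↦ isIntegral_character V.ρ g⁻¹
  have sum_eq : ∑ g, V.character g⁻¹ * V.character g = Fintype.card G := by
    have norm_sq (g : G) : V.character g⁻¹ * V.character g = (‖V.character g‖ ^ 2 : ℝ) :=
      (mul_comm _ _).trans (character_mul_character_inv V.ρ g)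
    simp only [norm_sq]
    exact_mod_cast sum_norm_sq_character V
  have c_eq : c = algebraMap ℚ ℂ (Fintype.card G / finrank ℂ V) := by
    rw [map_div₀, map_natCast, map_natCast, eq_div_iff (by exact_mod_cast finrank_ne_zero),
      hc_mul, sum_eq]
  rw [c_eq, isIntegral_algebraMap_iff (algebraMap ℚ ℂ).injective,
    IsIntegrallyClosed.isIntegral_iff] at hc
  obtain ⟨z, hz⟩ := hc
  rw [eq_div_iff finrank_ne_zero, eq_intCast] at hz
  refine Int.natCast_dvd_natCast.mp (Dvd.intro_left z ?_)
  exact_mod_cast hz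

theorem exists_isIntegral_mul_finrank_eq_index_mul_sum [CategoryTheory.Simple V] (H : Subgroup G)
    {f : H → ℂ} (hconj : ∀ x g, f (x * g * x⁻¹) = f g) (hint : ∀ g, IsIntegral ℤ (f g)) :
    ∃ c : ℂ, IsIntegral ℤ c ∧ c * finrank ℂ V = H.index * ∑ k : H, f k * V.character k := by
  rw [← sum_inducedChar_mul H f fun x g ↦ V.char_conj g x]
  exact exists_isIntegral_mul_finrank_eq_sum V (inducedChar_conj H f)
    (isIntegral_inducedChar H hconj hint)

end IrreducibleRepresentations

section CyclicSylow

open Subgroup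

variable {G : Type*} [Group G]

theorem le_centralizer_singleton_of_mem (H : Subgroup G) [IsMulCommutative H] {x : G}
    (hx : x ∈ H) : H ≤ centralizer {x} :=
  H.le_centralizer.trans (centralizer_le (Set.singleton_subset_iff.mpr hx))

variable {p : ℕ} [Fact p.Prime] (P : Sylow p G)

theorem exists_orderOf_eq_pow_succ {A : Type*} [Group A] (hA : IsPGroup p A) {x : A}
    (hx : x ≠ 1) : ∃ r, orderOf x = p ^ (r + 1) := by
  obtain ⟨_ | r, hr⟩ := IsPGroup.iff_orderOf.mp hA x
  · exact absurd (orderOf_eq_one_iff.mp (by simpa using hr)) hx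
  · exact ⟨r, hr⟩

-- `α` is a power map `g ↦ g ^ m`, and fixing an element of order divisible by `p` forces
-- `m ≡ 1 [ZMOD p]`, hence `m ^ |A| ≡ 1` modulo `|A|`.
theorem mulAut_pow_card_eq_one_of_apply_eq_self {A : Type*} [Group A] [Finite A] [IsCyclic A]
    (hA : IsPGroup p A) {α : MulAut A} {x : A} (hx : x ≠ 1) (hfix : α x = x) :
    α ^ Nat.card A = 1 := by
  obtain ⟨m, hm⟩ := α.toMonoidHom.map_cyclic
  replace hm (g : A) : α g = g ^ m := hm g
  have p_dvd : (p : ℤ) ∣ m - 1 := by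
    have dvd_orderOf : p ∣ orderOf x := by
      obtain ⟨r, hr⟩ := exists_orderOf_eq_pow_succ hA hx
      exact hr ▸ dvd_pow_self p r.succ_ne_zero
    refine (Int.natCast_dvd_natCast.mpr dvd_orderOf).trans (orderOf_dvd_iff_zpow_eq_one.mpr ?_)
    rw [zpow_sub_one, ← hm, hfix, mul_inv_cancel]
  have pow_apply (k : ℕ) (g : A) : (α ^ k) g = g ^ (m ^ k) := by
    induction k with
    | zero => simp
    | succ k ih => rw [pow_succ', MulAut.mul_apply, ih, hm, ← zpow_mul, pow_succ]
  obtain ⟨n, hn⟩ := hA.exists_card_eq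
  have card_dvd : (Nat.card A : ℤ) ∣ m ^ Nat.card A - 1 := by
    have := dvd_sub_pow_of_dvd_sub p_dvd n
    rw [one_pow] at this
    rw [hn, Nat.cast_pow]
    exact (pow_dvd_pow _ n.le_succ).trans this
  ext g
  obtain ⟨w, hw⟩ := card_dvd
  rw [pow_apply, MulAut.one_apply, eq_add_of_sub_eq hw, zpow_add_one, zpow_mul, zpow_natCast,
    pow_card_eq_one', one_zpow, one_mul]

variable [Finite G]

theorem normalizer_le_centralizer_of_mem_center [IsCyclic P] {x : G} (hxP : x ∈ P)
    (hx : x ≠ 1) (hcenter : x ∈ center G) : normalizer P ≤ centralizer (P : Set G) := by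
  intro g hg
  let toAut := (P : Subgroup G).normalizerMonoidHom
  have ker_eq : toAut.ker =
      (centralizer ((P : Subgroup G) : Set G)).subgroupOf (normalizer ((P : Subgroup G) : Set G)) :=
    (P : Subgroup G).normalizerMonoidHom_ker
  let α := toAut ⟨g, hg⟩
  have orderOf_dvd_card : orderOf α ∣ Nat.card P :=
    orderOf_dvd_of_pow_eq_one <| mulAut_pow_card_eq_one_of_apply_eq_self P.2
      (x := ⟨x, hxP⟩) (by simpa [Subtype.ext_iff] using hx) <| Subtype.ext <| by
        change g * x * g⁻¹ = x
        rw [mem_center_iff.mp hcenter g, mul_inv_cancel_right]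
  have orderOf_dvd_index : orderOf α ∣ (P : Subgroup G).index := by
    refine (orderOf_dvd_of_pow_eq_one (n := toAut.ker.index) ?_).trans ?_
    · rw [← map_pow]
      exact toAut.ker.pow_index_mem _
    · rw [ker_eq]
      exact (relIndex_dvd_of_le_left _ (P : Subgroup G).le_centralizer).trans
        (relIndex_dvd_index_of_le P.le_normalizer)
  have α_eq_one : α = 1 := orderOf_eq_one_iff.mp <|
    Nat.eq_one_of_dvd_coprimes P.card_coprime_index orderOf_dvd_card orderOf_dvd_index
  have mem_ker : (⟨g, hg⟩ : normalizer (P : Set G)) ∈ toAut.ker := α_eq_one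
  rwa [ker_eq] at mem_ker

theorem exists_normal_complement_of_mem_center [IsCyclic P] {x : G} (hxP : x ∈ P) (hx : x ≠ 1)
    (hcenter : x ∈ center G) : ∃ K : Subgroup G, K.Normal ∧ Nat.card K * Nat.card P = Nat.card G :=
  have hP := normalizer_le_centralizer_of_mem_center P hxP hx hcenter
  ⟨(MonoidHom.transferSylow P hP).ker, inferInstance,
    (MonoidHom.ker_transferSylow_isComplement' P hP).card_mul_card⟩

theorem exists_normal_complement_in_centralizer [IsCyclic P] {x : G} (hxP : x ∈ P) (hx : x ≠ 1) :
    ∃ L ≤ centralizer {x}, centralizer {x} ≤ normalizer L ∧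
      Nat.card L * Nat.card P = Nat.card (centralizer {x}) := by
  have hPC := le_centralizer_singleton_of_mem (P : Subgroup G) hxP
  set C := centralizer {x}
  let e : P.subtype hPC ≃* P := subgroupOfEquivOfLe hPC
  have : IsCyclic (P.subtype hPC) := isCyclic_of_surjective e.symm e.symm.surjective
  obtain ⟨K, hK, card_mul⟩ := exists_normal_complement_of_mem_center (P.subtype hPC)
    (x := ⟨x, hPC hxP⟩) hxP (by simpa [Subtype.ext_iff] using hx) <| mem_center_iff.mpr fun c ↦
      Subtype.ext (mem_centralizer_singleton_iff.mp c.2)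
  refine ⟨K.map C.subtype, map_subtype_le K, ?_, ?_⟩
  · simpa only [normalizer_eq_top, ← MonoidHom.range_eq_map, range_subtype] using
      le_normalizer_map C.subtype (H := K)
  · rw [card_map_of_injective C.subtype_injective, ← card_mul, Nat.card_congr e.toEquiv]

theorem card_normalizer_zpowers_le {x : G} (hxP : x ∈ P) (hx : x ≠ 1)
    (hP : (P : Subgroup G) ≤ centralizer {x}) :
    Nat.card (normalizer (zpowers x : Set G)) ≤ (p - 1) * Nat.card (centralizer {x}) := by
  have hp : p.Prime := Fact.out
  have centralizer_eq : centralizer (zpowers x : Set G) = centralizer {x} := by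
    rw [zpowers_eq_closure, centralizer_closure]
  have centralizer_le : centralizer {x} ≤ normalizer (zpowers x : Set G) :=
    centralizer_eq ▸ centralizer_le_normalizer _
  obtain ⟨r, hr⟩ := exists_orderOf_eq_pow_succ P.2 (x := ⟨x, hxP⟩)
    (by simpa [Subtype.ext_iff] using hx)
  rw [orderOf_mk] at hr
  have relIndex_dvd : (centralizer {x}).relIndex (normalizer (zpowers x : Set G)) ∣
      p ^ r * (p - 1) := by
    have := card_dvd_of_injective _
      (QuotientGroup.kerLift_injective (zpowers x).normalizerMonoidHom)
    rwa [normalizerMonoidHom_ker, ← index, ← relIndex, centralizer_eq, IsCyclic.card_mulAut,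
      Nat.card_zpowers, hr, Nat.totient_prime_pow_succ hp] at this
  have coprime : ((centralizer {x}).relIndex (normalizer (zpowers x : Set G))).Coprime
      (p ^ r) := by
    refine Nat.Coprime.pow_right _ (Nat.coprime_comm.mp <| hp.coprime_iff_not_dvd.mpr fun h ↦ ?_)
    exact P.not_dvd_index
      (h.trans ((relIndex_dvd_index_of_le centralizer_le).trans (index_dvd_of_le hP)))
  rw [← relIndex_bot_left, ← relIndex_bot_left (centralizer {x}), mul_comm,
    ← relIndex_mul_relIndex _ _ _ bot_le centralizer_le]
  gcongr
  exact Nat.le_of_dvd (Nat.sub_pos_of_lt hp.one_lt) (coprime.dvd_of_dvd_mul_left relIndex_dvd)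

end CyclicSylow

section ConjugateCounting

open Subgroup

variable {G : Type*} [Group G]

theorem exists_pow_mul_pow_eq_pow {x : G} {L : Subgroup G} (hL : ∀ k ∈ L, Commute x k)
    (hcop : (orderOf x).Coprime (Nat.card L)) :
    ∃ m : ℕ, ∀ i : ℕ, ∀ k ∈ L, (x ^ i * k) ^ m = x ^ i := by
  obtain ⟨m, hm_one, hm_zero⟩ := Nat.chineseRemainder hcop 1 0
  refine ⟨m, fun i k hk ↦ ?_⟩
  have k_pow : k ^ m = 1 := by
    obtain ⟨w, rfl⟩ := Nat.modEq_zero_iff_dvd.mp hm_zero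
    rw [pow_mul, show k ^ Nat.card L = 1 from
      congr_arg Subtype.val (pow_card_eq_one' (x := (⟨k, hk⟩ : L))), one_pow]
  rw [((hL k hk).pow_left i).mul_pow, k_pow, mul_one, ← pow_mul, pow_eq_pow_iff_modEq]
  simpa only [mul_one] using hm_one.mul_left i

theorem injOn_pow_mul {x : G} {L : Subgroup G} (hL : ∀ k ∈ L, Commute x k)
    (hcop : (orderOf x).Coprime (Nat.card L)) :
    Set.InjOn (fun q : ℕ × L ↦ x ^ q.1 * q.2) {q | q.1 < orderOf x} := by
  obtain ⟨m, hm⟩ := exists_pow_mul_pow_eq_pow hL hcop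
  intro q hq q' hq' heq
  have pow_eq : x ^ q.1 = x ^ q'.1 := by
    rw [← hm q.1 q.2 q.2.2, ← hm q'.1 q'.2 q'.2.2]
    exact congr_arg (· ^ m) heq
  refine Prod.ext (pow_injOn_Iio_orderOf hq hq' pow_eq) (Subtype.ext ?_)
  exact mul_left_cancel ((congr_arg (· * (q.2 : G)) pow_eq).symm.trans heq)

theorem pow_mul_ne_one {x : G} (hx : x ≠ 1) {L : Subgroup G} (hL : ∀ k ∈ L, Commute x k)
    (hcop : (orderOf x).Coprime (Nat.card L)) {i : ℕ} (hi : i.Coprime (orderOf x)) {k : G}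
    (hk : k ∈ L) : x ^ i * k ≠ 1 := by
  obtain ⟨m, hm⟩ := exists_pow_mul_pow_eq_pow hL hcop
  intro h
  have pow_eq_one : x ^ i = 1 := by rw [← hm i k hk, h, one_pow]
  exact hx <| orderOf_eq_one_iff.mp <|
    Nat.eq_one_of_dvd_coprimes hi (orderOf_dvd_of_pow_eq_one pow_eq_one) dvd_rfl

theorem mem_normalizer_zpowers_of_conj_pow_mul_eq {x : G} {L : Subgroup G}
    (hL : ∀ k ∈ L, Commute x k) (hcop : (orderOf x).Coprime (Nat.card L)) {h k k' : G} {i j : ℕ}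
    (hi : i.Coprime (orderOf x)) (hj : j.Coprime (orderOf x)) (hk : k ∈ L) (hk' : k' ∈ L)
    (hconj : h * (x ^ i * k) * h⁻¹ = x ^ j * k') : h ∈ normalizer (zpowers x : Set G) := by
  obtain ⟨m, hm⟩ := exists_pow_mul_pow_eq_pow hL hcop
  have conj_eq : MulAut.conj h (x ^ i) = x ^ j := by
    rw [MulAut.conj_apply, ← hm i k hk, ← hm j k' hk', ← hconj, conj_pow]
  have zpowers_pow {l : ℕ} (hl : l.Coprime (orderOf x)) : zpowers (x ^ l) = zpowers x :=
    le_antisymm (zpowers_le.mpr (npow_mem_zpowers x l)) <| zpowers_le.mpr <| by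
      obtain ⟨e, he⟩ := exists_pow_eq_self_of_coprime hl
      exact ⟨e, by simpa only [zpow_natCast] using he⟩
  rw [mem_normalizer_iff_map_conj_eq]
  conv_lhs => rw [← zpowers_pow hi]
  rw [← zpowers_pow hj, MonoidHom.map_zpowers]
  exact congr_arg zpowers conj_eq

variable [Fintype G]

theorem card_filter_conj_eq_le (N : Subgroup G) {S : Finset G}
    (hN : ∀ s ∈ S, ∀ h, h * s * h⁻¹ ∈ S → h ∈ N) (g : G) :
    ((Finset.univ ×ˢ S).filter fun q ↦ q.1 * q.2 * q.1⁻¹ = g).card ≤ Fintype.card N := by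
  obtain h | ⟨⟨h₀, s₀⟩, h₀_mem⟩ :=
    ((Finset.univ ×ˢ S).filter fun q ↦ q.1 * q.2 * q.1⁻¹ = g).eq_empty_or_nonempty
  · simp only [h, Finset.card_empty, zero_le]
  simp only [Finset.mem_filter, Finset.mem_product, Finset.mem_univ, true_and] at h₀_mem
  rw [Fintype.card_subtype]
  refine Finset.card_le_card_of_injOn (fun q ↦ h₀⁻¹ * q.1) (fun q hq ↦ ?_) fun q hq q' hq' heq ↦ ?_
  · simp only [Finset.coe_filter, Finset.mem_product, Finset.mem_univ, true_and,
      Set.mem_ofPred_eq] at hq ⊢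
    refine hN q.2 hq.1 _ ?_
    convert h₀_mem.1 using 1
    rw [← hq.2] at h₀_mem
    rw [mul_inv_rev, inv_inv]
    calc h₀⁻¹ * q.1 * q.2 * (q.1⁻¹ * h₀) = h₀⁻¹ * (q.1 * q.2 * q.1⁻¹) * h₀ := by group
      _ = s₀ := by rw [← h₀_mem.2]; group
  · have fst_eq : q.1 = q'.1 := mul_left_cancel heq
    simp only [Finset.coe_filter, Set.mem_ofPred_eq] at hq hq'
    refine Prod.ext fst_eq ?_
    have := hq.2.trans hq'.2.symm
    rwa [fst_eq, mul_left_inj, mul_right_inj] at this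

theorem card_mul_sum_le_card_mul_sum (N : Subgroup G) {S T : Finset G}
    (hN : ∀ s ∈ S, ∀ h, h * s * h⁻¹ ∈ S → h ∈ N) (hT : ∀ s ∈ S, ∀ h, h * s * h⁻¹ ∈ T)
    {a : G → ℝ} (ha : ∀ g, 0 ≤ a g) (hconj : ∀ h g, a (h * g * h⁻¹) = a g) :
    Fintype.card G * ∑ s ∈ S, a s ≤ Fintype.card N * ∑ g ∈ T, a g := by
  calc Fintype.card G * ∑ s ∈ S, a s
      = ∑ q ∈ Finset.univ ×ˢ S, a (q.1 * q.2 * q.1⁻¹) := by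
        simp only [hconj, Finset.sum_product, Finset.sum_const, Finset.card_univ, nsmul_eq_mul]
    _ = ∑ g ∈ T, ∑ q ∈ Finset.univ ×ˢ S with q.1 * q.2 * q.1⁻¹ = g, a (q.1 * q.2 * q.1⁻¹) :=
        (Finset.sum_fiberwise_of_maps_to
          (fun q hq ↦ hT q.2 (Finset.mem_product.mp hq).2 q.1) _).symm
    _ ≤ ∑ g ∈ T, Fintype.card N * a g := by
        refine Finset.sum_le_sum fun g _ ↦ ?_
        rw [Finset.sum_congr rfl fun q hq ↦ by rw [(Finset.mem_filter.mp hq).2],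
          Finset.sum_const, nsmul_eq_mul]
        gcongr
        exacts [ha g, card_filter_conj_eq_le N hN g]
    _ = Fintype.card N * ∑ g ∈ T, a g := (Finset.mul_sum ..).symm

end ConjugateCounting

section CharacterSections

open Subgroup

variable {G : Type} [Group G] [Fintype G] (V : FDRep ℂ G) [CategoryTheory.Simple V]

theorem sum_norm_sq_character_erase_one_lt :
    ∑ g ∈ Finset.univ.erase 1, ‖V.character g‖ ^ 2 < Fintype.card G := by
  have := nontrivial_of_simple V
  have norm_one_pos : 0 < ‖V.character 1‖ ^ 2 := by
    rw [FDRep.char_one, Complex.norm_natCast]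
    exact_mod_cast pow_pos finrank_pos 2
  rw [← sum_norm_sq_character V, ← Finset.sum_erase_add _ _ (Finset.mem_univ (1 : G))]
  exact lt_add_of_pos_right _ norm_one_pos

theorem sum_norm_sq_pow_mul_lt_card_normalizer {x : G}
    (hx : x ≠ 1) {L : Subgroup G} (hL : ∀ k ∈ L, Commute x k)
    (hcop : (orderOf x).Coprime (Nat.card L)) :
    ∑ i ∈ Finset.range (orderOf x) with i.Coprime (orderOf x),
      ∑ k : L, ‖V.character (x ^ i * k)‖ ^ 2 < Nat.card (normalizer (zpowers x : Set G)) := by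
  let I := {i ∈ Finset.range (orderOf x) | i.Coprime (orderOf x)}
  let S : Finset G := (I ×ˢ Finset.univ).image fun q : ℕ × L ↦ x ^ q.1 * q.2
  have sum_S : ∑ s ∈ S, ‖V.character s‖ ^ 2 =
      ∑ i ∈ I, ∑ k : L, ‖V.character (x ^ i * k)‖ ^ 2 := by
    rw [Finset.sum_image, Finset.sum_product]
    refine (injOn_pow_mul hL hcop).mono fun q hq ↦ ?_
    simp only [I, Finset.coe_product, Set.mem_prod, Finset.mem_coe, Finset.mem_filter] at hq
    exact Finset.mem_range.mp hq.1.1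
  have mem_S {s : G} (hs : s ∈ S) : ∃ i k, i.Coprime (orderOf x) ∧ k ∈ L ∧ x ^ i * k = s := by
    obtain ⟨⟨i, k⟩, hik, rfl⟩ := Finset.mem_image.mp hs
    exact ⟨i, k, (Finset.mem_filter.mp (Finset.mem_product.mp hik).1).2, k.2, rfl⟩
  have counting := card_mul_sum_le_card_mul_sum (normalizer (zpowers x : Set G)) (S := S)
    (T := Finset.univ.erase 1) (a := fun g ↦ ‖V.character g‖ ^ 2) (fun s hs h hconj ↦ by
      obtain ⟨i, k, hi, hk, rfl⟩ := mem_S hs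
      obtain ⟨j, k', hj, hk', heq⟩ := mem_S hconj
      exact mem_normalizer_zpowers_of_conj_pow_mul_eq hL hcop hi hj hk hk' heq.symm)
    (fun s hs h ↦ by
      obtain ⟨i, k, hi, hk, rfl⟩ := mem_S hs
      refine Finset.mem_erase.mpr ⟨?_, Finset.mem_univ _⟩
      rw [Ne, conj_eq_one_iff]
      exact pow_mul_ne_one hx hL hcop hi hk)
    (fun g ↦ sq_nonneg _) (fun h g ↦ by rw [FDRep.char_conj])
  rw [← sum_S, Nat.card_eq_fintype_card]
  have card_pos : (0 : ℝ) < Fintype.card G := by exact_mod_cast Fintype.card_pos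
  refine lt_of_mul_lt_mul_left (counting.trans_lt ?_) card_pos.le
  rw [mul_comm (Fintype.card G : ℝ)]
  gcongr
  exact sum_norm_sq_character_erase_one_lt V

end CharacterSections

section NonvanishingBound

open Subgroup

theorem isIntegral_div_of_mul_eq_mul {K : Type*} [Field K] [CharZero K] {c η : K} {m t : ℕ}
    (ht : t ≠ 0) (hcop : m.Coprime t) (hc : IsIntegral ℤ c) (hη : IsIntegral ℤ η)
    (heq : c * t = m * η) : IsIntegral ℤ (η / t) := by
  obtain ⟨u, v, huv⟩ := Nat.isCoprime_iff_coprime.mpr hcop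
  have bezout : (u * m + v * t : K) = 1 := by exact_mod_cast huv
  have div_eq : η / t = u * c + v * η := by
    rw [div_eq_iff (Nat.cast_ne_zero.mpr ht)]
    linear_combination (-u : K) * heq - η * bezout
  rw [div_eq]
  exact (isIntegral_algebraMap.mul hc).add (isIntegral_algebraMap.mul hη)

theorem exists_aeval_pow_eq_average_norm_sq {G W : Type*} [Group G] [Finite G] [AddCommGroup W]
    [Module ℂ W] [FiniteDimensional ℂ W] (ρ : Representation ℂ G W) {n : ℕ} [NeZero n] {ω : ℂ}
    (hω : IsPrimitiveRoot ω n) {x : G} (hx : x ^ n = 1) (L : Subgroup G) [Fintype L]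
    (hL : ∀ k ∈ L, Commute x k) :
    ∃ F : ℤ[X], ∀ i, aeval (ω ^ i) F =
      ((Fintype.card L : ℝ)⁻¹ * ∑ k : L, ‖ρ.character (x ^ i * k)‖ ^ 2 : ℝ) := by
  obtain ⟨F, hF⟩ := exists_aeval_pow_eq_average_character (ρ.linHom ρ) hω hx L hL
  refine ⟨F, fun i ↦ ?_⟩
  have := hF (i + n) (by simp [NeZero.ne n])
  rw [pow_add, hω.pow_eq_one, mul_one] at this
  rw [this]
  simp only [pow_add, hx, mul_one, Representation.char_linHom,
    mul_comm (ρ.character _⁻¹), character_mul_character_inv]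
  push_cast
  rfl

variable {G : Type} [Group G] [Fintype G] (V : FDRep ℂ G) [CategoryTheory.Simple V]

theorem exists_isIntegral_mul_finrank_eq_index_mul_sum_coset {x : G} {L : Subgroup G}
    (hLC : L ≤ centralizer {x}) (hCN : centralizer {x} ≤ normalizer L) :
    ∃ c : ℂ, IsIntegral ℤ c ∧ c * finrank ℂ V =
      (centralizer {x}).index * (∑ k : L, ‖V.character (x * k)‖ ^ 2 : ℝ) := by
  have hxC : x ∈ centralizer {x} := mem_centralizer_singleton_iff.mpr rfl
  let f (c : centralizer {x}) : ℂ := if x⁻¹ * (c : G) ∈ L then V.character (c : G)⁻¹ else 0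
  obtain ⟨c, hc, hc_mul⟩ := exists_isIntegral_mul_finrank_eq_index_mul_sum V (centralizer {x})
    (f := f) (fun y c ↦ by
      have conj_eq : x⁻¹ * ((y : G) * c * (y : G)⁻¹) = y * (x⁻¹ * c) * (y : G)⁻¹ := by
        have : Commute x⁻¹ (y : G) :=
          (show Commute (y : G) x from mem_centralizer_singleton_iff.mp y.2).symm.inv_left
        simp only [← mul_assoc, this.eq]
      simp only [f, Subgroup.coe_mul, coe_inv, conj_eq, ← mem_normalizer_iff.mp (hCN y.2), conj_inv,
        FDRep.char_conj])
    (fun c ↦ by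
      dsimp only [f]
      split_ifs
      exacts [isIntegral_character V.ρ _, isIntegral_zero])
  refine ⟨c, hc, hc_mul.trans ?_⟩
  congr 1
  push_cast
  refine (Fintype.sum_of_injective (fun k : L ↦ ⟨x * k, mul_mem hxC (hLC k.2)⟩)
    (fun k k' h ↦ Subtype.ext (mul_left_cancel (congr_arg Subtype.val h))) _ _
    (fun c hc ↦ ?_) fun k ↦ ?_).symm
  · have : x⁻¹ * (c : G) ∉ L := fun h ↦
      hc ⟨⟨_, h⟩, Subtype.ext (mul_inv_cancel_left x (c : G))⟩
    simp only [f, if_neg this, zero_mul]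
  · have norm_sq := character_mul_character_inv V.ρ (x * k)
    simp only [f, inv_mul_cancel_left, SetLike.coe_mem, if_true]
    rw [mul_comm]
    exact_mod_cast norm_sq.symm

theorem isIntegral_average_norm_sq_div {x : G} {L : Subgroup G} (hLC : L ≤ centralizer {x})
    (hCN : centralizer {x} ≤ normalizer L) {t : ℕ} (ht : t ∣ finrank ℂ V)
    (hcop : ((centralizer {x}).index * Fintype.card L).Coprime t) :
    IsIntegral ℤ
      (((Fintype.card L : ℝ)⁻¹ * ∑ k : L, ‖V.character (x * k)‖ ^ 2 : ℝ) / t : ℂ) := by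
  have := nontrivial_of_simple V
  have : NeZero (orderOf x) := ⟨(orderOf_pos x).ne'⟩
  have hω := Complex.isPrimitiveRoot_exp (orderOf x) (NeZero.ne _)
  obtain ⟨F, hF⟩ := exists_aeval_pow_eq_average_norm_sq V.ρ hω (pow_orderOf_eq_one x) L
    fun k hk ↦ (mem_centralizer_singleton_iff.mp (hLC hk)).symm
  obtain ⟨c, hc, hc_mul⟩ := exists_isIntegral_mul_finrank_eq_index_mul_sum_coset V hLC hCN
  have ht_ne : t ≠ 0 := ne_zero_of_dvd_ne_zero finrank_pos.ne' ht
  obtain ⟨e, he⟩ := ht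
  refine isIntegral_div_of_mul_eq_mul ht_ne hcop
    (hc.mul (isIntegral_algebraMap (x := (e : ℤ)))) ?_ ?_
  · have aeval_eq := hF 1
    simp only [pow_one] at aeval_eq
    exact aeval_eq ▸ isIntegral_aeval (hω.isIntegral (NeZero.pos _)) F
  · rw [he] at hc_mul
    push_cast at hc_mul ⊢
    have card_ne : (Fintype.card L : ℂ) ≠ 0 := by simp
    rw [mul_assoc c, mul_comm (e : ℂ), hc_mul]
    field_simp

theorem mul_totient_mul_card_le_sum_norm_sq {x : G} {L : Subgroup G} (hLC : L ≤ centralizer {x})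
    (hCN : centralizer {x} ≤ normalizer L) {t : ℕ} (ht : t ∣ finrank ℂ V)
    (hcop : ((centralizer {x}).index * Fintype.card L).Coprime t) (hx : V.character x ≠ 0) :
    (t * (orderOf x).totient * Fintype.card L : ℝ) ≤
      ∑ i ∈ Finset.range (orderOf x) with i.Coprime (orderOf x),
        ∑ k : L, ‖V.character (x ^ i * k)‖ ^ 2 := by
  have := nontrivial_of_simple V
  have : NeZero (orderOf x) := ⟨(orderOf_pos x).ne'⟩
  have hω := Complex.isPrimitiveRoot_exp (orderOf x) (NeZero.ne _)
  set ω := Complex.exp (2 * Real.pi * Complex.I / orderOf x)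
  have card_pos : (0 : ℝ) < Fintype.card L := by exact_mod_cast Fintype.card_pos
  let average (i : ℕ) : ℝ := (Fintype.card L : ℝ)⁻¹ * ∑ k : L, ‖V.character (x ^ i * k)‖ ^ 2
  obtain ⟨F, hF⟩ : ∃ F : ℤ[X], ∀ i, aeval (ω ^ i) F = (average i : ℂ) :=
    exists_aeval_pow_eq_average_norm_sq V.ρ hω (pow_orderOf_eq_one x) L fun k hk ↦
      (mem_centralizer_singleton_iff.mp (hLC hk)).symm
  have average_nonneg (i : ℕ) : 0 ≤ average i := by positivity
  have average_one_ne_zero : average 1 ≠ 0 := by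
    refine (mul_pos (inv_pos.mpr card_pos) <| Finset.sum_pos' (fun k _ ↦ sq_nonneg _)
      ⟨1, Finset.mem_univ _, ?_⟩).ne'
    rw [pow_one, Subgroup.coe_one, mul_one]
    exact pow_pos (norm_pos_iff.mpr hx) 2
  have aeval_ω : aeval ω F = (average 1 : ℂ) := by rw [← hF 1, pow_one]
  have bound : (t * (orderOf x).totient : ℝ) ≤
      ∑ i ∈ Finset.range (orderOf x) with i.Coprime (orderOf x), average i := by
    have := mul_totient_le_sum_coprime hω (ne_zero_of_dvd_ne_zero finrank_pos.ne' ht)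
      (aeval_ω ▸ Complex.ofReal_ne_zero.mpr average_one_ne_zero) <| by
        rw [aeval_ω]
        simpa only [average, pow_one] using isIntegral_average_norm_sq_div V hLC hCN ht hcop
    simpa only [hF, Complex.norm_real, Real.norm_of_nonneg (average_nonneg _)] using this
  rwa [← Finset.mul_sum, inv_mul_eq_div, le_div_iff₀ card_pos] at bound

end NonvanishingBound

section SylowBound

open Subgroup

variable {G : Type} [Group G] [Finite G] (V : FDRep ℂ G) [CategoryTheory.Simple V]

theorem pow_factorization_finrank_dvd_card {p : ℕ} [Fact p.Prime] (P : Sylow p G) :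
    p ^ (finrank ℂ V).factorization p ∣ Nat.card P :=
  have := Fintype.ofFinite G
  P.pow_dvd_card_of_pow_dvd_card <|
    (Nat.ordProj_dvd _ p).trans (Nat.card_eq_fintype_card (α := G) ▸ finrank_dvd_card V)

variable {V} {p : ℕ} [Fact p.Prime] {P : Sylow p G} [IsCyclic P] {x : G}

theorem pow_mul_totient_lt_of_character_ne_zero (hxP : x ∈ P) (hx : x ≠ 1)
    (hχ : V.character x ≠ 0) :
    p ^ (finrank ℂ V).factorization p * (orderOf x).totient < (p - 1) * Nat.card P := by
  have := Fintype.ofFinite G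
  obtain ⟨L, hLC, hCN, card_mul⟩ := exists_normal_complement_in_centralizer P hxP hx
  have index_mul : (centralizer {x}).index * Nat.card L = (P : Subgroup G).index := by
    refine Nat.eq_of_mul_eq_mul_right (Nat.card_pos (α := P)) ?_
    rw [mul_assoc, card_mul, index_mul_card]
    exact (index_mul_card _).symm
  have index_coprime (m : ℕ) : (P : Subgroup G).index.Coprime (p ^ m) :=
    ((Fact.out (p := p.Prime)).coprime_iff_not_dvd.mpr P.not_dvd_index).symm.pow_right m
  have orderOf_coprime : (orderOf x).Coprime (Nat.card L) := by
    obtain ⟨r, hr⟩ := IsPGroup.iff_orderOf.mp P.2 ⟨x, hxP⟩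
    rw [orderOf_mk] at hr
    exact hr ▸ ((index_coprime r).coprime_dvd_left (Dvd.intro_left _ index_mul)).symm
  have lower := mul_totient_mul_card_le_sum_norm_sq V hLC hCN
    (Nat.ordProj_dvd (finrank ℂ V) p) (by
      rw [← Nat.card_eq_fintype_card, index_mul]
      exact index_coprime _) hχ
  have upper := sum_norm_sq_pow_mul_lt_card_normalizer V hx
    (fun k hk ↦ (mem_centralizer_singleton_iff.mp (hLC hk)).symm) orderOf_coprime
  have normalizer_le := card_normalizer_zpowers_le P hxP hx
    (le_centralizer_singleton_of_mem (P : Subgroup G) hxP)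
  refine lt_of_mul_lt_mul_right (a := Nat.card L) ?_ (Nat.zero_le _)
  calc p ^ (finrank ℂ V).factorization p * (orderOf x).totient * Nat.card L
      < Nat.card (normalizer (zpowers x : Set G)) := by
        rw [Nat.card_eq_fintype_card (α := L)]
        exact_mod_cast lower.trans_lt upper
    _ ≤ (p - 1) * (Nat.card L * Nat.card P) := card_mul ▸ normalizer_le
    _ = (p - 1) * Nat.card P * Nat.card L := by ring

theorem orderOf_mul_dvd_card_of_character_ne_zero (hxP : x ∈ P) (hχ : V.character x ≠ 0) :
    orderOf x * p ^ (finrank ℂ V).factorization p ∣ Nat.card P := by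
  have hp : p.Prime := Fact.out
  obtain rfl | hx := eq_or_ne x 1
  · simpa only [orderOf_one, one_mul] using pow_factorization_finrank_dvd_card V P
  obtain ⟨N, hN⟩ := P.2.exists_card_eq
  obtain ⟨r, hr⟩ := exists_orderOf_eq_pow_succ P.2 (x := ⟨x, hxP⟩)
    (by simpa [Subtype.ext_iff] using hx)
  rw [orderOf_mk] at hr
  have bound := pow_mul_totient_lt_of_character_ne_zero hxP hx hχ
  set a := (finrank ℂ V).factorization p
  rw [hr, hN, Nat.totient_prime_pow_succ hp, ← mul_assoc, ← pow_add, mul_comm] at bound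
  have exponent_lt : a + r < N :=
    (Nat.pow_lt_pow_iff_right hp.one_lt).mp (lt_of_mul_lt_mul_left bound (Nat.zero_le _))
  rw [hr, hN, ← pow_add]
  exact pow_dvd_pow p (by omega)

end SylowBound

section LinearCharacters

theorem isIrreducibleCharacter_monoidHom {A : Type} [Group A] [Finite A] (l : A →* ℂ) :
    IsIrreducibleCharacter (l : A → ℂ) := by
  have := Fintype.ofFinite A
  have : NeZero (Nat.card A : ℂ) := ⟨by simp⟩
  let ρ : Representation ℂ A ℂ := (algebraMap ℂ (End ℂ ℂ)).toMonoidHom.comp l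
  have character_eq : (FDRep.of ρ).character = l := by
    ext g
    change LinearMap.trace ℂ ℂ (ρ g) = l g
    simp [ρ, Algebra.algebraMap_eq_smul_one]
  refine ⟨FDRep.of ρ, ?_, character_eq.symm⟩
  rw [FDRep.simple_iff_char_is_norm_one, character_eq]
  simp only [← map_mul, mul_inv_cancel, map_one, Finset.sum_const, Finset.card_univ, nsmul_eq_mul,
    mul_one, Nat.card_eq_fintype_card]

theorem inducedChar_apply_of_mem_center {A : Type*} [Group A] [Fintype A] (H : Subgroup A)
    (f : H → ℂ) {x : A} (hx : x ∈ Subgroup.center A) :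
    inducedChar H f x = if h : x ∈ H then H.index * f ⟨x, h⟩ else 0 := by
  have conj_eq (y : A) : y * x * y⁻¹ = x := by
    rw [Subgroup.mem_center_iff.mp hx y, mul_inv_cancel_right]
  have card_eq : (Fintype.card A : ℂ) = Fintype.card H * H.index := by
    simp only [← Nat.card_eq_fintype_card, ← H.card_mul_index, Nat.cast_mul]
  simp only [inducedChar, conj_eq]
  split_ifs with h
  · rw [Finset.sum_congr rfl (g := fun _ ↦ f ⟨x, h⟩) fun _ _ ↦ rfl, Finset.sum_const,
      Finset.card_univ, nsmul_eq_mul, card_eq, mul_assoc, inv_mul_cancel_left₀ (by simp)]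
  · rw [Finset.sum_const_zero, mul_zero]

theorem sum_monoidHom_mul_inv {A : Type*} [Group A] [Fintype A] (l μ : A →* ℂ) :
    ∑ g, l g * (μ g)⁻¹ = if l = μ then (Fintype.card A : ℂ) else 0 := by
  have eq_iff : l * invMonoidHom.comp μ = 1 ↔ l = μ := by
    simp only [MonoidHom.ext_iff, MonoidHom.mul_apply, MonoidHom.comp_apply, invMonoidHom_apply,
      MonoidHom.one_apply]
    exact forall_congr' fun g ↦ mul_inv_eq_one₀ (((Group.isUnit g).map μ).ne_zero)
  simpa only [eq_iff, MonoidHom.mul_apply, MonoidHom.comp_apply, invMonoidHom_apply, Nat.cast_ite,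
    Nat.cast_zero] using sum_hom_units (l * invMonoidHom.comp μ)

theorem sum_multiset_mul_inv {A : Type*} [Group A] [Fintype A] (M : Multiset (A →* ℂ))
    (μ : A →* ℂ) :
    ∑ g, (M.map (· g)).sum * (μ g)⁻¹ = Fintype.card A * M.count μ := by
  induction M using Multiset.induction with
  | empty => simp
  | cons l M ih =>
    simp only [Multiset.map_cons, Multiset.sum_cons, add_mul, Finset.sum_add_distrib, ih,
      sum_monoidHom_mul_inv, Multiset.count_cons, @eq_comm _ μ l]
    split_ifs <;> push_cast <;> ring

theorem count_map_comp_subtype_of_forall_notMem {A : Type*} [Group A] [Fintype A]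
    (Q : Subgroup A) {M : Multiset (A →* ℂ)} (hM : ∀ x ∉ Q, (M.map (· x)).sum = 0)
    (μ : A →* ℂ) :
    (M.map (·.comp Q.subtype)).count (μ.comp Q.subtype) = Q.index * M.count μ := by
  have card_ne : (Fintype.card Q : ℂ) ≠ 0 := by simp
  have sum_eq : ∑ k : Q, (M.map (· (k : A))).sum * (μ k)⁻¹ = Fintype.card A * M.count μ := by
    rw [← sum_multiset_mul_inv]
    refine (sum_dite_mem_mul Q (fun k : Q ↦ (M.map (· (k : A))).sum) fun g ↦ (μ g)⁻¹).symm.trans ?_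
    refine Finset.sum_congr rfl fun g _ ↦ ?_
    split_ifs with hg
    exacts [rfl, by rw [hM g hg]]
  have card_mul : (Fintype.card Q * (M.map (·.comp Q.subtype)).count (μ.comp Q.subtype) : ℂ) =
      Fintype.card Q * (Q.index * M.count μ : ℕ) := by
    rw [← sum_multiset_mul_inv, Nat.cast_mul, ← mul_assoc, ← Nat.cast_mul,
      ← Nat.card_eq_fintype_card, Q.card_mul_index, Nat.card_eq_fintype_card, ← sum_eq]
    simp only [Multiset.map_map, Function.comp_def, MonoidHom.comp_apply, Subgroup.coe_subtype]
  exact_mod_cast mul_left_cancel₀ card_ne card_mul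

theorem exists_multiset_sum_eq_sum_inducedChar {A : Type*} [CommGroup A] [Fintype A]
    (Q : Subgroup A) {M : Multiset (A →* ℂ)} (hM : ∀ x ∉ Q, (M.map (· x)).sum = 0) :
    ∃ S : Multiset (Q →* ℂ), ∀ x,
      (M.map (· x)).sum = (S.map fun l : Q →* ℂ ↦ inducedChar Q l x).sum := by
  obtain ⟨S, hS⟩ := Multiset.exists_smul_of_dvd_count (M.map (·.comp Q.subtype)) (k := Q.index)
    fun l hl ↦ by
      obtain ⟨μ, -, rfl⟩ := Multiset.mem_map.mp hl
      exact ⟨_, count_map_comp_subtype_of_forall_notMem Q hM μ⟩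
  refine ⟨S, fun x ↦ ?_⟩
  have hx : x ∈ Subgroup.center A := Subgroup.mem_center_iff.mpr fun y ↦ mul_comm y x
  simp only [inducedChar_apply_of_mem_center Q _ hx]
  split_ifs with hxQ
  · have := congr_arg (fun N : Multiset (Q →* ℂ) ↦ (N.map (· ⟨x, hxQ⟩)).sum) hS
    simp only [Multiset.map_map, Multiset.map_nsmul, Multiset.sum_nsmul, nsmul_eq_mul] at this
    rw [Multiset.sum_map_mul_left]
    exact this
  · rw [hM x hxQ, Multiset.map_const', Multiset.sum_replicate, smul_zero]

theorem exists_monoidHom_of_forall_exists_smul {ι K A W : Type*} [Monoid A] [Field K]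
    [AddCommGroup W] [Module K W] (ρ : Representation K A W) (b : Basis ι K W)
    (hb : ∀ j a, ∃ c : K, ρ a (b j) = c • b j) :
    ∃ l : ι → A →* K, ∀ j a, ρ a (b j) = l j a • b j := by
  choose c hc using hb
  refine ⟨fun j ↦ ⟨⟨c j, ?_⟩, fun a a' ↦ ?_⟩, hc⟩ <;>
    refine smul_left_injective K (b.ne_zero j) ?_ <;> dsimp only
  · rw [← hc, map_one, one_smul, End.one_apply]
  · rw [← hc, map_mul, End.mul_apply, hc j a', map_smul, hc j a, smul_smul, mul_comm]

theorem exists_multiset_character_eq_sum {A W : Type*} [Group A] [Finite A] [IsCyclic A]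
    [AddCommGroup W] [Module ℂ W] [FiniteDimensional ℂ W] (ρ : Representation ℂ A W) :
    ∃ M : Multiset (A →* ℂ), ∀ x, ρ.character x = (M.map (· x)).sum := by
  obtain ⟨g, hg⟩ := IsCyclic.exists_zpow_surjective (G := A)
  have pow_succ_eq : ρ g ^ (Nat.card A + 1) = ρ g := by
    rw [pow_succ, ← map_pow, pow_card_eq_one', map_one, one_mul]
  obtain ⟨b, μ, hμ, -⟩ := exists_basis_of_pow_succ_eq_self Nat.card_pos.ne' pow_succ_eq
  obtain ⟨l, hl⟩ := exists_monoidHom_of_forall_exists_smul ρ b fun j a ↦ by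
    obtain ⟨i, rfl⟩ := (mem_powers_iff_mem_zpowers (x := g)).mpr (hg a)
    exact ⟨μ j ^ i, by simpa only [map_pow] using pow_apply_of_apply_eq_smul (hμ j) i⟩
  refine ⟨Finset.univ.val.map l, fun x ↦ ?_⟩
  rw [Multiset.map_map, Representation.character, ← pow_one (ρ x),
    trace_pow_eq_sum_of_basis b fun j ↦ hl j x]
  simp only [pow_one]
  rfl

theorem exists_subgroup_index_eq_and_mem_iff {A : Type*} [CommGroup A] [Finite A] [IsCyclic A]
    {d : ℕ} (hd : d ∣ Nat.card A) :
    ∃ Q : Subgroup A, Q.index = d ∧ ∀ x, x ∈ Q ↔ orderOf x * d ∣ Nat.card A := by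
  obtain ⟨m, hm⟩ := hd
  have card_pos : 0 < d * m := hm ▸ Nat.card_pos
  refine ⟨(powMonoidHom m).ker, ?_, fun x ↦ ?_⟩
  · rw [IsCyclic.index_powMonoidHom_ker, hm, Nat.gcd_mul_left_left,
      Nat.mul_div_cancel _ (Nat.pos_of_mul_pos_left card_pos)]
  · rw [MonoidHom.mem_ker, powMonoidHom_apply, ← orderOf_dvd_iff_pow_eq_one, hm, mul_comm d,
      Nat.mul_dvd_mul_iff_right (Nat.pos_of_mul_pos_right card_pos)]

theorem sumInducedProperty_of_forall_notMem (p : ℕ) {G : Type} [Group G] [Fintype G]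
    {P : Subgroup G} [IsCyclic P] (V : FDRep ℂ G) {Q : Subgroup P}
    (hindex : Q.index = p ^ (finrank ℂ V).factorization p)
    (hQ : ∀ x : P, x ∉ Q → V.character x = 0) :
    SumInducedProperty p P V.character (finrank ℂ V) := by
  let : CommGroup P := IsCyclic.commGroup
  obtain ⟨M, hM⟩ := exists_multiset_character_eq_sum (V.ρ.comp P.subtype)
  replace hM (x : P) : V.character x = (M.map (· x)).sum := hM x
  obtain ⟨S, hS⟩ := exists_multiset_sum_eq_sum_inducedChar Q fun x hx ↦ hM x ▸ hQ x hx
  refine ⟨S.toList.length, fun _ ↦ Q, fun i ↦ S.toList.get i,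
    fun i ↦ isIrreducibleCharacter_monoidHom _, fun _ ↦ hindex.symm, fun x ↦ ?_⟩
  rw [hM, hS]
  conv_lhs => rw [← Multiset.coe_toList S, Multiset.map_coe, Multiset.sum_coe]
  exact (Fin.sum_univ_fun_getElem S.toList fun l : Q →* ℂ ↦ inducedChar Q l x).symm

end LinearCharacters

theorem strong_form_of_cyclic_sylow
    (p : ℕ) [Fact p.Prime] (G : Type) [Group G] [Fintype G]
    (P : Sylow p G) (hcyc : IsCyclic ↥(P : Subgroup G)) :
    ∀ (V : FDRep ℂ G), CategoryTheory.Simple V →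
      SumInducedProperty p (P : Subgroup G) V.character (Module.finrank ℂ V) := by
  intro V _
  let : CommGroup P := IsCyclic.commGroup
  obtain ⟨Q, hindex, mem_Q⟩ :=
    exists_subgroup_index_eq_and_mem_iff (pow_factorization_finrank_dvd_card V P)
  refine sumInducedProperty_of_forall_notMem p V hindex fun x hx ↦ ?_
  by_contra hχ
  refine hx ((mem_Q x).mpr ?_)
  rw [← Subgroup.orderOf_coe]
  exact orderOf_mul_dvd_card_of_character_ne_zero x.2 hχ
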